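/- Let y ∈ V^n be a probability vector with positive components, let 1 < d < n−1 with y_1 > y_d and y_{d+1} > y_n (so that K_d(y) is nonempty), and let k be a positive integer. The following are equivalent: (1) for every x ∈ K_d(y) there exists a probability vector c of dimension at most k with positive components such that x⊗c ◁ y⊗c; (2) for every x ∈ K_d(y), x^{⊗k} ◁ y^{⊗k}; (3) y_d^k < y_1^{k−1} y_{d+1} and y_{d+1}^k > y_n^{k−1} y_d. -/

import Mathlib

noncomputable section

/-- `eSum x l` : the sum of the `l` largest components of `x`. -/
def eSum {n : ℕ} (x : Fin n → ℝ) (l : ℕ) : ℝ :=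
  sSup {r | ∃ s : Finset (Fin n), s.card = l ∧ r = ∑ i ∈ s, x i}

/-- `ESum x l` : the sum of the `l` smallest components of `x`. -/
def ESum {n : ℕ} (x : Fin n → ℝ) (l : ℕ) : ℝ :=
  sInf {r | ∃ s : Finset (Fin n), s.card = l ∧ r = ∑ i ∈ s, x i}

/-- Majorization `x ≺ y` (for vectors with equal total sum):
`e_l(x) ≤ e_l(y)` for all `1 ≤ l ≤ n`. -/
def Maj {n : ℕ} (x y : Fin n → ℝ) : Prop :=
  (∑ i, x i) = (∑ i, y i) ∧ ∀ l : ℕ, 1 ≤ l → l ≤ n → eSum x l ≤ eSum y l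

/-- Strict majorization `x ◁ y`: equal total sums and `e_l(x) < e_l(y)` for all
`1 ≤ l ≤ n - 1`. -/
def SMaj {n : ℕ} (x y : Fin n → ℝ) : Prop :=
  (∑ i, x i) = (∑ i, y i) ∧ ∀ l : ℕ, 1 ≤ l → l + 1 ≤ n → eSum x l < eSum y l

/-- Super-majorization `x ≺ʷ y` : `E_l(x) ≥ E_l(y)` for all `1 ≤ l ≤ n`. -/
def SupMaj {n : ℕ} (x y : Fin n → ℝ) : Prop :=
  ∀ l : ℕ, 1 ≤ l → l ≤ n → ESum y l ≤ ESum x l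

/-- Strict super-majorization `x ◁ʷ y` : `E_l(x) > E_l(y)` for all `1 ≤ l ≤ n`. -/
def SSupMaj {n : ℕ} (x y : Fin n → ℝ) : Prop :=
  ∀ l : ℕ, 1 ≤ l → l ≤ n → ESum y l < ESum x l

/-- Tensor product of two vectors: the vector of all pairwise products. -/
def tensor {m k : ℕ} (x : Fin m → ℝ) (c : Fin k → ℝ) : Fin (m * k) → ℝ :=
  fun i => x (finProdFinEquiv.symm i).1 * c (finProdFinEquiv.symm i).2

/-- `k`-fold tensor power of a vector. -/
def tpow {n : ℕ} (x : Fin n → ℝ) (k : ℕ) : Fin (n ^ k) → ℝ :=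
  fun i => ∏ j : Fin k, x (finFunctionFinEquiv.symm i j)

/-- `V^n` : probability vectors with components in non-increasing order. -/
def Vn (n : ℕ) : Set (Fin n → ℝ) :=
  {x | (∀ i, 0 ≤ x i) ∧ (∑ i, x i) = 1 ∧ Antitone x}

/-- `S(y)` : members of `V^n` majorized by `y`. -/
def Sset {n : ℕ} (y : Fin n → ℝ) : Set (Fin n → ℝ) :=
  {x ∈ Vn n | Maj x y}

/-- `T(y,c)` : members of `V^n` with `x ⊗ c ≺ y ⊗ c`. -/
def Tcat {n k : ℕ} (y : Fin n → ℝ) (c : Fin k → ℝ) : Set (Fin n → ℝ) :=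
  {x ∈ Vn n | Maj (tensor x c) (tensor y c)}

/-- Local uniformity `l_u(c)` : the minimum of the consecutive ratios `c_{i+1}/c_i`. -/
def lu {k : ℕ} (c : Fin k → ℝ) : ℝ :=
  sInf {r | ∃ i : ℕ, ∃ h : i + 1 < k, r = c ⟨i + 1, h⟩ / c ⟨i, Nat.lt_of_succ_lt h⟩}

/-- Global uniformity `g_u(c) = c_k / c_1` (smallest over largest component of a
non-increasingly ordered vector). -/
def gu {k : ℕ} (c : Fin k → ℝ) : ℝ :=
  if h : 0 < k then c ⟨k - 1, Nat.sub_lt h Nat.one_pos⟩ / c ⟨0, h⟩ else 1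

/-- Largest component. -/
def maxc {n : ℕ} (x : Fin n → ℝ) : ℝ := sSup (Set.range x)

/-- Smallest component. -/
def minc {n : ℕ} (x : Fin n → ℝ) : ℝ := sInf (Set.range x)

/-- `c'` is a (contiguous) segment of `c`. -/
def IsSegment {j k : ℕ} (c' : Fin j → ℝ) (c : Fin k → ℝ) : Prop :=
  ∃ (i : ℕ) (_h : i + j ≤ k), ∀ t : Fin j, c' t = c ⟨i + t, by have := t.isLt; omega⟩

/-- The first `d` components of a vector. -/
def take {n : ℕ} (x : Fin n → ℝ) (d : ℕ) (h : d ≤ n) : Fin d → ℝ :=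
  fun i => x ⟨i, Nat.lt_of_lt_of_le i.isLt h⟩

/-- The components of a vector after the first `d` ones. -/
def drop {n : ℕ} (x : Fin n → ℝ) (d : ℕ) : Fin (n - d) → ℝ :=
  fun i => x ⟨d + i, by have := i.isLt; omega⟩

/-- The segment `(c_i, …, c_j)` of `c` (`0`-based indices). -/
def seg {k : ℕ} (c : Fin k → ℝ) (i j : ℕ) (hij : i ≤ j) (hj : j < k) :
    Fin (j - i + 1) → ℝ :=
  fun t => c ⟨i + t, by have := t.isLt; omega⟩

/-- `(c_i, …, c_j)` is a block of the decomposition `[c]_α` of the (positive,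
non-increasingly ordered) vector `c` according to `α`: ratios within the block
exceed `α`, and the ratios at the two boundaries of the block are `≤ α`
(or the block touches an end of `c`). -/
def IsBlock {k : ℕ} (α : ℝ) (c : Fin k → ℝ) (i j : ℕ) : Prop :=
  ∃ (hij : i ≤ j) (hj : j < k),
    (i = 0 ∨ c ⟨i, by omega⟩ / c ⟨i - 1, by omega⟩ ≤ α) ∧
    (j = k - 1 ∨ ∃ hj1 : j + 1 < k, c ⟨j + 1, hj1⟩ / c ⟨j, hj⟩ ≤ α) ∧
    (∀ (t : ℕ) (ht1 : i ≤ t) (ht2 : t < j), α < c ⟨t + 1, by omega⟩ / c ⟨t, by omega⟩)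

/-- `T_k(y)` : states transformable to `y` with a `k`-dimensional catalyst. -/
def Tk {n : ℕ} (k : ℕ) (y : Fin n → ℝ) : Set (Fin n → ℝ) :=
  {x ∈ Vn n | ∃ c : Fin k → ℝ, (∀ i, 0 < c i) ∧ (∑ i, c i) = 1 ∧ Antitone c ∧
    Maj (tensor x c) (tensor y c)}

/-- `M_k(y)` : states `x` with `x^{⊗k} ≺ y^{⊗k}`. -/
def Mk {n : ℕ} (k : ℕ) (y : Fin n → ℝ) : Set (Fin n → ℝ) :=
  {x ∈ Vn n | Maj (tpow x k) (tpow y k)}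

/-- `T(y)` : states transformable to `y` with some catalyst. -/
def Tinf {n : ℕ} (y : Fin n → ℝ) : Set (Fin n → ℝ) :=
  {x ∈ Vn n | ∃ (k : ℕ) (c : Fin k → ℝ), 0 < k ∧ (∀ i, 0 < c i) ∧ (∑ i, c i) = 1 ∧
    Antitone c ∧ Maj (tensor x c) (tensor y c)}

/-- `M(y)` : states `x` with `x^{⊗k} ≺ y^{⊗k}` for some `k ≥ 1`. -/
def Minf {n : ℕ} (y : Fin n → ℝ) : Set (Fin n → ℝ) :=
  {x ∈ Vn n | ∃ k : ℕ, 1 ≤ k ∧ Maj (tpow x k) (tpow y k)}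

/-- `S^λ(y)` : states `x` with `x ≺ʷ λ y`. -/
def Slam {n : ℕ} (lam : ℝ) (y : Fin n → ℝ) : Set (Fin n → ℝ) :=
  {x ∈ Vn n | SupMaj x (fun i => lam * y i)}

/-- `T^λ(y,c)` : states `x` with `x ⊗ c ≺ʷ λ (y ⊗ c)`. -/
def Tlamc {n k : ℕ} (lam : ℝ) (y : Fin n → ℝ) (c : Fin k → ℝ) : Set (Fin n → ℝ) :=
  {x ∈ Vn n | SupMaj (tensor x c) (fun i => lam * tensor y c i)}

/-- `T_k^λ(y)`. -/
def Tklam {n : ℕ} (k : ℕ) (lam : ℝ) (y : Fin n → ℝ) : Set (Fin n → ℝ) :=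
  {x ∈ Vn n | ∃ c : Fin k → ℝ, (∀ i, 0 < c i) ∧ (∑ i, c i) = 1 ∧ Antitone c ∧
    SupMaj (tensor x c) (fun i => lam * tensor y c i)}

/-- `M_k^λ(y)`. -/
def Mklam {n : ℕ} (k : ℕ) (lam : ℝ) (y : Fin n → ℝ) : Set (Fin n → ℝ) :=
  {x ∈ Vn n | SupMaj (tpow x k) (fun i => lam ^ k * tpow y k i)}

/-- `T^λ(y)`. -/
def Tlaminf {n : ℕ} (lam : ℝ) (y : Fin n → ℝ) : Set (Fin n → ℝ) :=
  {x ∈ Vn n | ∃ (k : ℕ) (c : Fin k → ℝ), 0 < k ∧ (∀ i, 0 < c i) ∧ (∑ i, c i) = 1 ∧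
    Antitone c ∧ SupMaj (tensor x c) (fun i => lam * tensor y c i)}

/-- `M^λ(y)`. -/
def Mlaminf {n : ℕ} (lam : ℝ) (y : Fin n → ℝ) : Set (Fin n → ℝ) :=
  {x ∈ Vn n | ∃ k : ℕ, 1 ≤ k ∧ SupMaj (tpow x k) (fun i => lam ^ k * tpow y k i)}

/-- `K_d(y)` : concatenations `x = x' ⊕ x''` with `x' ◁ y'` and `x'' ◁ y''`,
where `y'` is the first-`d` part of `y` and `y''` the rest. -/
def Kd {n : ℕ} (y : Fin n → ℝ) (d : ℕ) (h : d ≤ n) : Set (Fin n → ℝ) :=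
  {x ∈ Vn n | SMaj (take x d h) (take y d h) ∧ SMaj (drop x d) (drop y d)}

/-- `y(d)` : first `d` components equal to `e_d(y)/d`, the last `n-d` equal to
`(1 - e_d(y))/(n-d)`. -/
def yvec {n : ℕ} (y : Fin n → ℝ) (d : ℕ) : Fin n → ℝ :=
  fun i => if (i : ℕ) < d then eSum y d / d else (1 - eSum y d) / (n - d)

/-- `K_d^λ(y)` : states `x ∈ S^λ(y)` with `E_l(x) = λ E_l(y)` iff `l = n - d`. -/
def Kdlam {n : ℕ} (lam : ℝ) (y : Fin n → ℝ) (d : ℕ) : Set (Fin n → ℝ) :=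
  {x ∈ Vn n | SupMaj x (fun i => lam * y i) ∧
    ∀ l : ℕ, 1 ≤ l → l ≤ n → (ESum x l = lam * ESum y l ↔ l = n - d)}

section FiniteSums

lemma sum_le_eSum {ι : Type*} {N : ℕ} (e : ι ≃ Fin N) (F : ι → ℝ) (S : Finset ι) :
    ∑ p ∈ S, F p ≤ eSum (fun i => F (e.symm i)) S.card := by
  refine le_csSup ?_ ⟨S.map e.toEmbedding, by simp, by simp⟩
  refine Set.Finite.bddAbove (Set.Finite.subset
    (Set.finite_range fun s : Finset (Fin N) => ∑ i ∈ s, F (e.symm i)) ?_)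
  rintro r ⟨s, -, rfl⟩
  exact ⟨s, rfl⟩

lemma eSum_le {ι : Type*} {N : ℕ} (e : ι ≃ Fin N) (F : ι → ℝ) {l : ℕ} (hl : l ≤ N) {B : ℝ}
    (h : ∀ T : Finset ι, T.card = l → ∑ p ∈ T, F p ≤ B) :
    eSum (fun i => F (e.symm i)) l ≤ B := by
  refine csSup_le ?_ ?_
  · obtain ⟨s, -, hs⟩ := Finset.exists_subset_card_eq
      (s := (Finset.univ : Finset (Fin N))) (n := l) (by simpa using hl)
    exact ⟨_, s, hs, rfl⟩
  · rintro r ⟨s, hs, rfl⟩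
    simpa using h (s.map e.symm.toEmbedding) (by simpa using hs)

lemma sum_le_sum_of_forall_le {ι : Type*} [DecidableEq ι] (F : ι → ℝ) {S T : Finset ι}
    (hc : T.card = S.card)
    (h : ∀ p ∈ S, ∀ q ∉ S, F q ≤ F p) : ∑ p ∈ T, F p ≤ ∑ p ∈ S, F p := by
  have hc' : (T \ S).card = (S \ T).card := Finset.card_sdiff_comm hc
  have key : ∑ p ∈ T \ S, F p ≤ ∑ p ∈ S \ T, F p := by
    let f := Finset.equivOfCardEq hc'
    rw [← Finset.sum_coe_sort (T \ S), ← Finset.sum_coe_sort (S \ T), ← Equiv.sum_comp f]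
    refine Finset.sum_le_sum fun p _ => ?_
    exact h _ (Finset.mem_sdiff.1 (f p).2).1 _ (Finset.mem_sdiff.1 p.2).2
  exact Finset.sum_sdiff_le_sum_sdiff.1 key

lemma le_of_sum_max {ι : Type*} [DecidableEq ι] (F : ι → ℝ) {S : Finset ι}
    (hS : ∀ T : Finset ι, T.card = S.card → ∑ p ∈ T, F p ≤ ∑ p ∈ S, F p)
    {p q : ι} (hp : p ∈ S) (hq : q ∉ S) : F q ≤ F p := by
  have hq' : q ∉ S.erase p := fun h => hq (Finset.mem_of_mem_erase h)
  have h := hS (insert q (S.erase p)) (by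
    rw [Finset.card_insert_of_notMem hq', Finset.card_erase_add_one hp])
  rw [Finset.sum_insert hq', ← Finset.add_sum_erase S F hp] at h
  linarith

lemma exists_isLowerSet_sum_max {ι : Type*} [Fintype ι] [PartialOrder ι] {F : ι → ℝ}
    (hF : Antitone F) {l : ℕ} (hl : l ≤ Fintype.card ι) :
    ∃ S : Finset ι, IsLowerSet (S : Set ι) ∧ S.card = l ∧
      ∀ T : Finset ι, T.card = l → ∑ p ∈ T, F p ≤ ∑ p ∈ S, F p := by
  classical
  let rank : ι → ℕ := fun p => (Finset.univ.filter (· < p)).card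
  have hrank : ∀ p q, p < q → rank p < rank q := by
    intro p q hpq
    refine Finset.card_lt_card
      (Finset.ssubset_iff_of_subset ?_ |>.2 ⟨p, by simpa using hpq, by simp⟩)
    intro r hr
    simp only [Finset.mem_filter, Finset.mem_univ, true_and] at hr ⊢
    exact hr.trans hpq
  obtain ⟨S₀, hS₀, hmax⟩ := Finset.exists_max_image
    (Finset.powersetCard l (Finset.univ : Finset ι)) (fun T => ∑ p ∈ T, F p)
    (Finset.powersetCard_nonempty.2 (by simpa using hl))
  obtain ⟨S, hS, hmin⟩ := Finset.exists_min_image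
    ((Finset.powersetCard l (Finset.univ : Finset ι)).filter
      fun T => ∑ p ∈ S₀, F p ≤ ∑ p ∈ T, F p) (fun T => ∑ p ∈ T, rank p)
    ⟨S₀, by simpa using hS₀⟩
  simp only [Finset.mem_filter, Finset.mem_powersetCard, Finset.subset_univ,
    true_and] at hS hmax hmin
  refine ⟨S, ?_, hS.1, fun T hT => (hmax T hT).trans hS.2⟩
  intro q p hpq hq
  by_contra hp
  simp only [Finset.mem_coe] at hp hq
  have hlt : p < q := lt_of_le_of_ne hpq (by rintro rfl; exact hp hq)
  have hp' : p ∉ S.erase q := fun h => hp (Finset.mem_of_mem_erase h)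
  have h := hmin (insert p (S.erase q)) ⟨by
    rw [Finset.card_insert_of_notMem hp', Finset.card_erase_add_one hq, hS.1], by
    have := hF hpq
    rw [Finset.sum_insert hp']
    have h2 := hS.2
    rw [← Finset.add_sum_erase S F hq] at h2
    linarith⟩
  rw [Finset.sum_insert hp', ← Finset.add_sum_erase S rank hq] at h
  have := hrank p q hlt
  omega

/-- Strict majorization of antitone families, tested on lower sets of indices. -/
lemma sMaj_of_lowerSet {ι : Type*} [Fintype ι] [PartialOrder ι] {N : ℕ}
    (e : ι ≃ Fin N) {X Y : ι → ℝ} (hX : Antitone X)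
    (htot : ∑ p, X p = ∑ p, Y p)
    (hle : ∀ S : Finset ι, IsLowerSet (S : Set ι) → ∑ p ∈ S, X p ≤ ∑ p ∈ S, Y p)
    (hlt : ∀ S : Finset ι, IsLowerSet (S : Set ι) → S.Nonempty → S ≠ Finset.univ →
      ∑ p ∈ S, X p = ∑ p ∈ S, Y p → ∃ p ∈ S, ∃ q ∉ S, Y p < Y q) :
    SMaj (fun i => X (e.symm i)) (fun i => Y (e.symm i)) := by
  classical
  have hcard : Fintype.card ι = N := by simpa using Fintype.card_congr e
  refine ⟨by rw [Equiv.sum_comp e.symm X, Equiv.sum_comp e.symm Y, htot], ?_⟩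
  intro l hl1 hl2
  by_contra hcon
  push Not at hcon
  obtain ⟨S, hlow, hSl, hmax⟩ := exists_isLowerSet_sum_max hX (l := l) (by omega)
  have h1 : eSum (fun i => X (e.symm i)) l ≤ ∑ p ∈ S, X p := eSum_le e X (by omega) hmax
  have h2 := hle S hlow
  have h3 : ∀ T : Finset ι, T.card = S.card → ∑ p ∈ T, Y p ≤ eSum (fun i => Y (e.symm i)) l := by
    intro T hT
    rw [← hSl, ← hT]
    exact sum_le_eSum e Y T
  have h4 := h3 S rfl
  obtain ⟨p, hp, q, hq, hpq⟩ := hlt S hlow (Finset.card_pos.1 (by omega))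
    (by rintro rfl; rw [Finset.card_univ] at hSl; omega) (by linarith)
  have := le_of_sum_max Y (S := S) (fun T hT => by linarith [h3 T hT]) hp hq
  linarith

lemma not_sMaj_of_forall_le {ι : Type*} [Fintype ι] {N : ℕ} (e : ι ≃ Fin N) {X Y : ι → ℝ}
    {S : Finset ι} (hne : S.Nonempty)
    (huniv : S ≠ Finset.univ) (hY : ∀ p ∈ S, ∀ q ∉ S, Y q ≤ Y p)
    (hS : ∑ p ∈ S, X p = ∑ p ∈ S, Y p) :
    ¬ SMaj (fun i => X (e.symm i)) (fun i => Y (e.symm i)) := by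
  classical
  have hcard : Fintype.card ι = N := by simpa using Fintype.card_congr e
  have hlt : S.card < N := by
    rw [← hcard]
    exact (Finset.card_lt_iff_ne_univ S).2 huniv
  rintro ⟨-, h⟩
  have h1 := h S.card (Finset.card_pos.2 hne) hlt
  have h2 := sum_le_eSum e X S
  have h3 := eSum_le e Y hlt.le fun T hT => sum_le_sum_of_forall_le Y hT hY
  linarith

end FiniteSums

section Blocks

/-- A set of indices is a union of the blocks `{i < d}` and `{i ≥ d}`. -/
def BlockClosed {n : ℕ} (d : ℕ) (D : Finset (Fin n)) : Prop :=
  ∀ i j : Fin n, ((i : ℕ) < d ↔ (j : ℕ) < d) → i ∈ D → j ∈ D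

lemma SMaj.sum_le_of_isLowerSet {m : ℕ} {z w : Fin m → ℝ} (h : SMaj z w) (hw : Antitone w)
    {E : Finset (Fin m)} (hE : IsLowerSet (E : Set (Fin m))) :
    ∑ i ∈ E, z i ≤ ∑ i ∈ E, w i ∧
      (∑ i ∈ E, z i = ∑ i ∈ E, w i → E = ∅ ∨ E = Finset.univ) := by
  by_cases h0 : E = ∅
  · simp [h0]
  by_cases h1 : E = Finset.univ
  · simp [h1, h.1]
  have hlt : E.card < m := by
    simpa using (Finset.card_lt_iff_ne_univ E).2 h1
  have h2 := sum_le_eSum (Equiv.refl _) z E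
  have h3 := h.2 E.card (Finset.card_pos.2 (Finset.nonempty_iff_ne_empty.2 h0)) hlt
  have h4 : eSum w E.card ≤ ∑ i ∈ E, w i :=
    eSum_le (Equiv.refl _) w hlt.le fun T hT => sum_le_sum_of_forall_le w hT
      fun p hp q hq => hw (le_of_not_ge fun hqp => hq (hE hqp hp))
  have key : ∑ i ∈ E, z i < ∑ i ∈ E, w i := lt_of_le_of_lt h2 (h3.trans_le h4)
  exact ⟨key.le, fun he => absurd he key.ne⟩

lemma sum_eq_take_add_drop {n d : ℕ} (hd : d ≤ n) (F : Fin n → ℝ) (D : Finset (Fin n)) :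
    ∑ i ∈ D, F i =
      ∑ i ∈ Finset.univ.filter (fun i : Fin d => Fin.castLE hd i ∈ D), take F d hd i +
      ∑ i ∈ Finset.univ.filter
        (fun i : Fin (n - d) => (⟨d + i, by have := i.isLt; omega⟩ : Fin n) ∈ D), drop F d i := by
  rw [← Finset.sum_filter_add_sum_filter_not D (fun i => (i : ℕ) < d)]
  congr 1
  · refine Finset.sum_bij' (fun i hi => ⟨i, (Finset.mem_filter.1 hi).2⟩)
      (fun i _ => Fin.castLE hd i) ?_ ?_ ?_ ?_ ?_ <;> simp +contextual [take]
  · refine Finset.sum_bij' (fun i hi => ⟨i - d, by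
        have := (Finset.mem_filter.1 hi).2; have := i.isLt; omega⟩)
      (fun i _ => ⟨d + i, by have := i.isLt; omega⟩) ?_ ?_ ?_ ?_ ?_
    all_goals simp +contextual [drop]

/-- The relation between the prefix sums of `x` and `y` that membership in `K_d(y)` provides. -/
structure BlockMaj {n : ℕ} (d : ℕ) (x y : Fin n → ℝ) : Prop where
  pos_left : ∀ i, 0 < x i
  pos_right : ∀ i, 0 < y i
  antitone_left : Antitone x
  antitone_right : Antitone y
  sum_le : ∀ D : Finset (Fin n), IsLowerSet (D : Set (Fin n)) → ∑ i ∈ D, x i ≤ ∑ i ∈ D, y i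
  closed_of_eq : ∀ D : Finset (Fin n), IsLowerSet (D : Set (Fin n)) →
    ∑ i ∈ D, x i = ∑ i ∈ D, y i → BlockClosed d D
  eq_of_closed : ∀ D : Finset (Fin n), BlockClosed d D → ∑ i ∈ D, x i = ∑ i ∈ D, y i

lemma blockMaj_of_mem_Kd {n d : ℕ} (hd : d ≤ n) {x y : Fin n → ℝ} (hy : y ∈ Vn n)
    (hypos : ∀ i, 0 < y i) (hx : x ∈ Kd y d hd) : BlockMaj d x y := by
  obtain ⟨⟨-, -, hxa⟩, ht, hdr⟩ := hx
  have hya := hy.2.2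
  have hta : Antitone (take y d hd) := fun i j hij => hya hij
  have hda : Antitone (drop y d) := fun i j hij => hya (by
    simp only [Fin.le_def] at hij ⊢; omega)
  have hlow : ∀ D : Finset (Fin n), IsLowerSet (D : Set (Fin n)) →
      ∑ i ∈ D, x i ≤ ∑ i ∈ D, y i ∧ (∑ i ∈ D, x i = ∑ i ∈ D, y i → BlockClosed d D) := by
    intro D hD
    have h1 := ht.sum_le_of_isLowerSet hta
      (E := Finset.univ.filter (fun i : Fin d => Fin.castLE hd i ∈ D)) (by
        intro i j hji hi
        simp only [Finset.coe_filter, Finset.mem_univ, true_and, Set.mem_ofPred_eq] at hi ⊢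
        exact Finset.mem_coe.1 (hD (show Fin.castLE hd j ≤ Fin.castLE hd i from hji)
          (Finset.mem_coe.2 hi)))
    have h2 := hdr.sum_le_of_isLowerSet hda
      (E := Finset.univ.filter
        (fun i : Fin (n - d) => (⟨d + i, by have := i.isLt; omega⟩ : Fin n) ∈ D)) (by
        intro i j hji hi
        simp only [Finset.coe_filter, Finset.mem_univ, true_and, Set.mem_ofPred_eq] at hi ⊢
        exact Finset.mem_coe.1 (hD (show (⟨d + j, _⟩ : Fin n) ≤ ⟨d + i, _⟩ from
          Nat.add_le_add_left hji d) (Finset.mem_coe.2 hi)))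
    rw [sum_eq_take_add_drop hd x, sum_eq_take_add_drop hd y]
    refine ⟨by linarith [h1.1, h2.1], fun heq => ?_⟩
    have h1' := h1.2 (by linarith [h1.1, h2.1])
    have h2' := h2.2 (by linarith [h1.1, h2.1])
    intro i j hij hi
    by_cases hid : (i : ℕ) < d
    · have hjd := hij.1 hid
      rcases h1' with h | h
      · exact absurd hi (Finset.filter_eq_empty_iff.1 h (x := ⟨i, hid⟩) (Finset.mem_univ _))
      · exact Finset.filter_eq_self.1 h ⟨j, hjd⟩ (Finset.mem_univ _)
    · have hjd : ¬ (j : ℕ) < d := fun h => hid (hij.2 h)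
      rcases h2' with h | h
      · refine absurd hi ?_
        have := Finset.filter_eq_empty_iff.1 h (x := ⟨i - d, by omega⟩) (Finset.mem_univ _)
        convert this using 2
        ext; simp; omega
      · have := Finset.filter_eq_self.1 h ⟨j - d, by omega⟩ (Finset.mem_univ _)
        convert this using 1
        ext; simp; omega
  have hcl : ∀ D : Finset (Fin n), BlockClosed d D → ∑ i ∈ D, x i = ∑ i ∈ D, y i := by
    intro D hD
    rw [sum_eq_take_add_drop hd x, sum_eq_take_add_drop hd y]
    congr 1
    · rcases Finset.eq_empty_or_nonempty
        (Finset.univ.filter (fun i : Fin d => Fin.castLE hd i ∈ D)) with h | ⟨i, hi⟩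
      · simp [h]
      · rw [Finset.filter_true_of_mem fun j _ => hD _ _ (by simp) (Finset.mem_filter.1 hi).2]
        exact ht.1
    · rcases Finset.eq_empty_or_nonempty
        (Finset.univ.filter
          (fun i : Fin (n - d) => (⟨d + i, by have := i.isLt; omega⟩ : Fin n) ∈ D)) with h | ⟨i, hi⟩
      · simp [h]
      · rw [Finset.filter_true_of_mem fun j _ => hD _ _ (by simp) (Finset.mem_filter.1 hi).2]
        exact hdr.1
  refine ⟨fun i => ?_, hypos, hxa, hya, fun D hD => (hlow D hD).1, fun D hD => (hlow D hD).2, hcl⟩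
  have hn : 0 < n := i.pos
  let z : Fin n := ⟨n - 1, by omega⟩
  have hz : ∀ j : Fin n, j ≤ z := fun j => by simp only [z, Fin.le_def]; omega
  have h1 := (hlow (Finset.univ.erase z) (by
    intro a b hab ha
    simp only [Finset.coe_erase, Finset.coe_univ, Set.mem_sdiff, Set.mem_univ, true_and,
      Set.mem_singleton_iff] at ha ⊢
    rintro rfl
    exact ha (le_antisymm (hz a) hab))).1
  have h2 := hcl Finset.univ fun _ _ _ _ => Finset.mem_univ _
  rw [← Finset.add_sum_erase _ x (Finset.mem_univ z),
    ← Finset.add_sum_erase _ y (Finset.mem_univ z)] at h2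
  have h3 := hypos z
  have h4 := hxa (hz i)
  linarith

lemma sMaj_average {m : ℕ} {w : Fin m → ℝ} (hw : Antitone w) (hm : 0 < m)
    (h : w ⟨m - 1, by omega⟩ < w ⟨0, hm⟩) : SMaj (fun _ => (∑ i, w i) / m) w := by
  have hm' : (0 : ℝ) < m := by exact_mod_cast hm
  refine ⟨by simp; field_simp, fun l hl1 hl2 => ?_⟩
  have h1 : eSum (fun _ : Fin m => (∑ i, w i) / m) l ≤ l * ((∑ i, w i) / m) :=
    eSum_le (Equiv.refl _) (fun _ : Fin m => (∑ i, w i) / m) (by omega) fun T hT => by simp [hT]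
  let E : Finset (Fin m) := Finset.univ.filter fun i => (i : ℕ) < l
  have hE : E.card = l := by
    rw [Fin.card_filter_val_lt]; omega
  have hEc : Eᶜ.card = m - l := by rw [Finset.card_compl, hE, Fintype.card_fin]
  have h2 := sum_le_eSum (Equiv.refl _) w E
  rw [hE] at h2
  refine lt_of_le_of_lt h1 (lt_of_lt_of_le ?_ h2)
  have h3 : 0 < ∑ i ∈ E, ∑ j ∈ Eᶜ, (w i - w j) := by
    have hnn : ∀ i ∈ E, ∀ j ∈ Eᶜ, 0 ≤ w i - w j := by
      intro i hi j hj
      simp only [E, Finset.mem_compl, Finset.mem_filter, Finset.mem_univ, true_and] at hi hj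
      exact sub_nonneg.2 (hw (by rw [Fin.le_def]; omega))
    refine Finset.sum_pos' (fun i hi => Finset.sum_nonneg (hnn i hi))
      ⟨⟨0, hm⟩, by simp [E]; omega, ?_⟩
    exact Finset.sum_pos' (hnn _ (by simp [E]; omega))
      ⟨⟨m - 1, by omega⟩, by simp [E]; omega, by linarith⟩
  have h4 : ∑ i ∈ E, ∑ j ∈ Eᶜ, (w i - w j) = (m - l) * ∑ i ∈ E, w i - l * ∑ j ∈ Eᶜ, w j := by
    simp only [Finset.sum_sub_distrib, Finset.sum_const, hE, hEc, nsmul_eq_mul,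
      ← Finset.mul_sum]
    rw [Nat.cast_sub (by omega)]
  have h5 := Finset.sum_add_sum_compl E w
  change (l : ℝ) * ((∑ i, w i) / m) < ∑ i ∈ E, w i
  rw [mul_div_assoc', div_lt_iff₀ hm']
  rw [← h5]
  nlinarith

lemma Kd_nonempty {n d : ℕ} (hd1 : 1 < d) (hd2 : d + 1 < n) {y : Fin n → ℝ} (hy : y ∈ Vn n)
    (hypos : ∀ i, 0 < y i)
    (hne1 : y ⟨0, by omega⟩ > y ⟨d - 1, by omega⟩)
    (hne2 : y ⟨d, by omega⟩ > y ⟨n - 1, by omega⟩) : (Kd y d (by omega)).Nonempty := by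
  have hdn : d ≤ n := by omega
  obtain ⟨-, hsum, hya⟩ := hy
  have hta : Antitone (take y d hdn) := fun i j hij => hya hij
  have hda : Antitone (drop y d) := fun i j hij => hya (by
    simp only [Fin.le_def] at hij ⊢; omega)
  have ht := sMaj_average hta (by omega) hne1
  have hdr := sMaj_average hda (by omega) (by
    have e : d + (n - d - 1) = n - 1 := by omega
    simpa [drop, e] using hne2)
  set A := (∑ i, take y d hdn i) / d
  set B := (∑ i, drop y d i) / (n - d : ℕ)
  have hd0 : (0 : ℝ) < d := by exact_mod_cast (by omega : 0 < d)
  have hnd0 : (0 : ℝ) < (n - d : ℕ) := by exact_mod_cast (by omega : 0 < n - d)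
  have hA : y ⟨d, by omega⟩ ≤ A := by
    rw [le_div_iff₀ hd0]
    have := Finset.card_nsmul_le_sum Finset.univ (take y d hdn) (y ⟨d, by omega⟩)
      fun i _ => hya (by simp only [Fin.le_def]; omega)
    simpa [mul_comm] using this
  have hB : B ≤ y ⟨d, by omega⟩ := by
    rw [div_le_iff₀ hnd0]
    have := Finset.sum_le_card_nsmul Finset.univ (drop y d) (y ⟨d, by omega⟩)
      fun i _ => hya (by simp [Fin.le_def])
    simpa [mul_comm] using this
  have hB0 : 0 ≤ B := div_nonneg (Finset.sum_nonneg fun i _ => (hypos _).le) hnd0.le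
  let x : Fin n → ℝ := fun i => if (i : ℕ) < d then A else B
  have hxt : take x d hdn = fun _ => A := by
    funext i; simp [x, take]
  have hxd : drop x d = fun _ => B := by
    funext i; simp [x, drop]
  refine ⟨x, ⟨fun i => ?_, ?_, fun i j hij => ?_⟩, by rwa [hxt], by rwa [hxd]⟩
  · have := hypos ⟨d, by omega⟩
    simp only [x]; split_ifs <;> linarith
  · rw [sum_eq_take_add_drop hdn y] at hsum
    rw [sum_eq_take_add_drop hdn x, hxt, hxd]
    simp only [Finset.mem_univ, Finset.filter_true] at hsum ⊢
    rw [ht.1, hdr.1, hsum]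
  · simp only [x, Fin.le_def] at hij ⊢
    split_ifs
    · exact le_rfl
    · omega
    · linarith
    · exact le_rfl

end Blocks

section Slices

/-- The section of `S` over `c`, for a product decomposition `e` of the index type. -/
def slice {ι κ : Type*} [DecidableEq ι] {n : ℕ} (e : ι ≃ Fin n × κ) (S : Finset ι) (c : κ) :
    Finset (Fin n) :=
  Finset.univ.filter fun i => e.symm (i, c) ∈ S

lemma mem_slice {ι κ : Type*} [DecidableEq ι] {n : ℕ} {e : ι ≃ Fin n × κ} {S : Finset ι} {c : κ}
    {i : Fin n} : i ∈ slice e S c ↔ e.symm (i, c) ∈ S := by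
  simp [slice]

lemma sum_eq_sum_slice {ι κ : Type*} [Fintype ι] [Fintype κ] [DecidableEq ι] {n : ℕ}
    (e : ι ≃ Fin n × κ) (S : Finset ι) (z : Fin n → ℝ) (w : κ → ℝ) :
    ∑ p ∈ S, z (e p).1 * w (e p).2 = ∑ c, w c * ∑ i ∈ slice e S c, z i := by
  have h1 : ∑ p ∈ S, z (e p).1 * w (e p).2 =
      ∑ p, if p ∈ S then z (e p).1 * w (e p).2 else 0 := by simp
  rw [h1, ← Equiv.sum_comp e.symm, Fintype.sum_prod_type_right]
  refine Finset.sum_congr rfl fun c _ => ?_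
  rw [slice, Finset.sum_filter, Finset.mul_sum]
  refine Finset.sum_congr rfl fun i _ => ?_
  by_cases h : e.symm (i, c) ∈ S <;> simp [h, mul_comm]

variable {ι κ : Type*} [Fintype ι] [Fintype κ] [DecidableEq ι] {n d : ℕ} {x y : Fin n → ℝ}
  {e : ι ≃ Fin n × κ} {S : Finset ι} {w : κ → ℝ}

lemma BlockMaj.sum_slice_nonneg (h : BlockMaj d x y) (hw : ∀ c, 0 < w c)
    (hS : ∀ c, IsLowerSet (slice e S c : Set (Fin n))) :
    0 ≤ ∑ p ∈ S, (y (e p).1 - x (e p).1) * w (e p).2 ∧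
      (∑ p ∈ S, (y (e p).1 - x (e p).1) * w (e p).2 = 0 →
        ∀ c, BlockClosed d (slice e S c)) := by
  rw [sum_eq_sum_slice e S (fun i => y i - x i) w]
  have hnn : ∀ c ∈ Finset.univ, 0 ≤ w c * ∑ i ∈ slice e S c, (y i - x i) := fun c _ =>
    mul_nonneg (hw c).le (by rw [Finset.sum_sub_distrib]; linarith [h.sum_le _ (hS c)])
  refine ⟨Finset.sum_nonneg hnn, fun h0 c => h.closed_of_eq _ (hS c) ?_⟩
  have := (Finset.sum_eq_zero_iff_of_nonneg hnn).1 h0 c (Finset.mem_univ c)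
  rw [mul_eq_zero, or_iff_right (hw c).ne', Finset.sum_sub_distrib] at this
  linarith

lemma BlockMaj.sum_slice_eq_zero (h : BlockMaj d x y)
    (hS : ∀ c, BlockClosed d (slice e S c)) :
    ∑ p ∈ S, (y (e p).1 - x (e p).1) * w (e p).2 = 0 := by
  rw [sum_eq_sum_slice e S (fun i => y i - x i) w]
  refine Finset.sum_eq_zero fun c _ => ?_
  rw [Finset.sum_sub_distrib, h.eq_of_closed _ (hS c), sub_self, mul_zero]

end Slices

section TensorPower

variable {n d k : ℕ} {x y : Fin n → ℝ}

lemma funSplitAt_symm_apply (m : Fin k) (f : Fin k → Fin n) (i : Fin n) :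
    (Equiv.funSplitAt m (Fin n)).symm (i, fun j => f j) = Function.update f m i := by
  funext j
  by_cases hj : j = m
  · subst hj; simp
  · simp [hj]

/-- All one-coordinate sections of `S` are unions of blocks. -/
def SectionsClosed (d : ℕ) (S : Finset (Fin k → Fin n)) : Prop :=
  ∀ m c, BlockClosed d (slice (Equiv.funSplitAt m (Fin n)) S c)

lemma sectionsClosed_iff {S : Finset (Fin k → Fin n)} :
    SectionsClosed d S ↔
      ∀ f g : Fin k → Fin n, (∀ j, (f j : ℕ) < d ↔ (g j : ℕ) < d) → f ∈ S → g ∈ S := by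
  constructor
  · intro h f g hfg hf
    suffices H : ∀ s : Finset (Fin k), s.piecewise g f ∈ S by simpa using H Finset.univ
    intro s
    induction s using Finset.induction_on with
    | empty => simpa using hf
    | insert j s hj ih =>
      rw [Finset.piecewise_insert, ← funSplitAt_symm_apply, ← mem_slice]
      refine h j _ (f j) (g j) (hfg j) ?_
      rw [mem_slice, funSplitAt_symm_apply]
      convert ih
      refine Function.update_eq_iff.2 ⟨by simp [hj], fun _ _ => rfl⟩
  · intro h m c i j hij hi
    rw [mem_slice] at hi ⊢
    refine h _ _ (fun t => ?_) hi
    by_cases ht : t = m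
    · subst ht; simpa using hij
    · simp [ht]

/-- The telescoping interpolation between the products of `x` and of `y`. -/
def hybrid (x y : Fin n → ℝ) (m : ℕ) (f : Fin k → Fin n) : ℝ :=
  ∏ j : Fin k, if (j : ℕ) < m then y (f j) else x (f j)

lemma hybrid_succ_sub (x y : Fin n → ℝ) (m : Fin k) (f : Fin k → Fin n) :
    hybrid x y (m + 1) f - hybrid x y m f =
      (y (Equiv.funSplitAt m (Fin n) f).1 - x (Equiv.funSplitAt m (Fin n) f).1) *
        (fun g : {j // j ≠ m} → Fin n =>
          ∏ j : {j // j ≠ m}, if (j.1 : ℕ) < m then y (g j) else x (g j))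
          (Equiv.funSplitAt m (Fin n) f).2 := by
  rw [hybrid, hybrid, Fintype.prod_eq_mul_prod_subtype_ne _ m,
    Fintype.prod_eq_mul_prod_subtype_ne
      (fun j : Fin k => if (j : ℕ) < m then y (f j) else x (f j)) m]
  have : ∀ j : {j // j ≠ m}, ((j.1 : ℕ) < m + 1) = ((j.1 : ℕ) < m) := fun j => by
    have := fun h => j.2 (Fin.ext h)
    exact propext ⟨fun h => by omega, fun h => by omega⟩
  simp only [this]
  simp
  ring

lemma sum_prod_sub_sum_prod (x y : Fin n → ℝ) (S : Finset (Fin k → Fin n)) :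
    ∑ f ∈ S, ∏ j, y (f j) - ∑ f ∈ S, ∏ j, x (f j) =
      ∑ m : Fin k, ∑ f ∈ S, (hybrid x y (m + 1) f - hybrid x y m f) := by
  rw [Finset.sum_comm, ← Finset.sum_sub_distrib]
  refine Finset.sum_congr rfl fun f _ => ?_
  rw [Fin.sum_univ_eq_sum_range (fun m => hybrid x y (m + 1) f - hybrid x y m f),
    Finset.sum_range_sub (fun m => hybrid x y m f)]
  simp [hybrid]

lemma BlockMaj.sum_prod_le (h : BlockMaj d x y) {S : Finset (Fin k → Fin n)}
    (hS : IsLowerSet (S : Set (Fin k → Fin n))) :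
    ∑ f ∈ S, ∏ j, x (f j) ≤ ∑ f ∈ S, ∏ j, y (f j) ∧
      (∑ f ∈ S, ∏ j, x (f j) = ∑ f ∈ S, ∏ j, y (f j) → SectionsClosed d S) := by
  have key : ∀ m : Fin k, 0 ≤ ∑ f ∈ S, (hybrid x y (m + 1) f - hybrid x y m f) ∧
      (∑ f ∈ S, (hybrid x y (m + 1) f - hybrid x y m f) = 0 →
        ∀ c, BlockClosed d (slice (Equiv.funSplitAt m (Fin n)) S c)) := by
    intro m
    simp only [hybrid_succ_sub]
    refine h.sum_slice_nonneg (e := Equiv.funSplitAt m (Fin n))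
      (w := fun g : {j // j ≠ m} → Fin n =>
        ∏ j : {j // j ≠ m}, if (j.1 : ℕ) < m then y (g j) else x (g j)) (fun g => ?_)
      (fun c i j hji hi => ?_)
    · refine Finset.prod_pos fun j _ => ?_
      split_ifs
      · exact h.pos_right _
      · exact h.pos_left _
    · rw [Finset.mem_coe, mem_slice] at hi ⊢
      refine Finset.mem_coe.1 (hS ?_ (Finset.mem_coe.2 hi))
      intro t
      by_cases ht : t = m
      · subst ht; simpa using hji
      · simp [ht]
  have hnn : ∀ m ∈ (Finset.univ : Finset (Fin k)),
      0 ≤ ∑ f ∈ S, (hybrid x y (m + 1) f - hybrid x y m f) := fun m _ => (key m).1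
  have htel := sum_prod_sub_sum_prod x y S
  refine ⟨by linarith [Finset.sum_nonneg hnn], fun heq m => (key m).2 ?_⟩
  exact (Finset.sum_eq_zero_iff_of_nonneg hnn).1 (by linarith) m (Finset.mem_univ m)

lemma BlockMaj.sum_prod_eq (h : BlockMaj d x y) {S : Finset (Fin k → Fin n)}
    (hS : SectionsClosed d S) : ∑ f ∈ S, ∏ j, x (f j) = ∑ f ∈ S, ∏ j, y (f j) := by
  have htel := sum_prod_sub_sum_prod x y S
  have hzero : ∀ m : Fin k, ∑ f ∈ S, (hybrid x y (m + 1) f - hybrid x y m f) = 0 := fun m => by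
    simp only [hybrid_succ_sub]
    exact h.sum_slice_eq_zero (w := fun g : {j // j ≠ m} → Fin n =>
      ∏ j : {j // j ≠ m}, if (j.1 : ℕ) < m then y (g j) else x (g j)) (hS m)
  simp only [hzero, Finset.sum_const_zero] at htel
  linarith

end TensorPower

section Obstruction

/-- In an antitone family, an initial segment followed by a drop by the factor `b / a`. -/
lemma exists_ratio_gap {K : ℕ} {u : Fin (K + 1) → ℝ} (hu : Antitone u) {a b : ℝ} (ha : 0 < a)
    (hb : 0 < b) :
    ∃ J, (∀ i, J < i → a * u i ≤ b * u J) ∧ b ^ (J : ℕ) * u 0 ≤ a ^ (J : ℕ) * u J := by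
  by_contra hcon
  push Not at hcon
  have key : ∀ J : Fin (K + 1), b ^ (J : ℕ) * u 0 ≤ a ^ (J : ℕ) * u J := by
    intro J
    induction J using Fin.induction with
    | zero => simp
    | succ J ih =>
      by_contra hJ
      have h1 : ∀ i, J.castSucc < i → a * u i ≤ b * u J.castSucc := by
        intro i hi
        have h2 : u i ≤ u J.succ := hu (Fin.castSucc_lt_iff_succ_le.1 hi)
        by_contra h3
        refine hJ ?_
        simp only [Fin.val_succ, Fin.val_castSucc] at ih ⊢
        have h4 : b * u J.castSucc ≤ a * u J.succ := by
          have := mul_le_mul_of_nonneg_left h2 ha.le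
          linarith
        calc b ^ ((J : ℕ) + 1) * u 0 = b * (b ^ (J : ℕ) * u 0) := by ring
          _ ≤ b * (a ^ (J : ℕ) * u J.castSucc) := by gcongr
          _ = a ^ (J : ℕ) * (b * u J.castSucc) := by ring
          _ ≤ a ^ (J : ℕ) * (a * u J.succ) := by gcongr
          _ = a ^ ((J : ℕ) + 1) * u J.succ := by ring
      exact absurd ih (not_le.2 (hcon _ h1))
  exact absurd (key (Fin.last K))
    (not_le.2 (hcon _ fun i hi => absurd (Fin.le_last i) (not_le.2 hi)))

variable {n d K : ℕ} {x y : Fin n → ℝ}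

lemma BlockMaj.sum_tensor_eq (h : BlockMaj d x y) {c : Fin K → ℝ}
    {S : Finset (Fin n × Fin K)}
    (hS : ∀ c, BlockClosed d (slice (Equiv.refl (Fin n × Fin K)) S c)) :
    ∑ p ∈ S, x p.1 * c p.2 = ∑ p ∈ S, y p.1 * c p.2 := by
  have := h.sum_slice_eq_zero (w := c) hS
  simp only [Equiv.refl_apply, sub_mul, Finset.sum_sub_distrib] at this
  linarith

lemma BlockMaj.not_sMaj_tensor_of_top (h : BlockMaj d x y) (hd1 : 1 < d) (hd2 : d + 1 < n)
    {L : ℕ} (hKL : K ≤ L) {c : Fin (K + 1) → ℝ} (hc : ∀ i, 0 < c i) (hca : Antitone c)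
    (hle : y ⟨0, by omega⟩ ^ L * y ⟨d, by omega⟩ ≤ y ⟨d - 1, by omega⟩ ^ (L + 1)) :
    ¬ SMaj (tensor x c) (tensor y c) := by
  have hya := h.antitone_right
  set a := y ⟨0, by omega⟩ with ha_def
  set b := y ⟨d - 1, by omega⟩ with hb_def
  set g := y ⟨d, by omega⟩ with hg_def
  have ha : 0 < a := h.pos_right _
  have hb : 0 < b := h.pos_right _
  have hba : b ≤ a := hya (by simp [Fin.le_def])
  obtain ⟨J, hJ1, hJ2⟩ := exists_ratio_gap hca ha hb
  have hJL : (J : ℕ) ≤ L := by omega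
  have hgap : g * c 0 ≤ b * c J := by
    refine le_of_mul_le_mul_left ?_ (pow_pos ha L)
    obtain ⟨t, rfl⟩ := Nat.exists_eq_add_of_le hJL
    have hc0 := hc 0
    have hcJ := hc J
    calc a ^ ((J : ℕ) + t) * (g * c 0) = (a ^ ((J : ℕ) + t) * g) * c 0 := by ring
      _ ≤ b ^ ((J : ℕ) + t + 1) * c 0 := by gcongr
      _ = b * b ^ t * (b ^ (J : ℕ) * c 0) := by ring
      _ ≤ b * b ^ t * (a ^ (J : ℕ) * c J) := by gcongr
      _ ≤ b * a ^ t * (a ^ (J : ℕ) * c J) := by gcongr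
      _ = a ^ ((J : ℕ) + t) * (b * c J) := by ring
  refine not_sMaj_of_forall_le finProdFinEquiv
    (X := fun p : Fin n × Fin (K + 1) => x p.1 * c p.2)
    (Y := fun p : Fin n × Fin (K + 1) => y p.1 * c p.2)
    (S := Finset.univ.filter fun p => (p.1 : ℕ) < d ∧ p.2 ≤ J)
    ⟨(⟨0, by omega⟩, 0), by simp; omega⟩ ?_ ?_ ?_
  · intro hS
    have := Finset.filter_eq_self.1 hS (⟨d, by omega⟩, 0) (Finset.mem_univ _)
    simp at this
  · rintro ⟨i, j⟩ hp ⟨i', j'⟩ hq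
    simp only [Finset.mem_filter, Finset.mem_univ, true_and, not_and] at hp hq
    have h1 : b * c J ≤ y i * c j :=
      mul_le_mul (hya (by simp only [Fin.le_def]; omega)) (hca hp.2) (hc J).le (h.pos_right i).le
    refine le_trans ?_ h1
    by_cases hi' : (i' : ℕ) < d
    · refine le_trans ?_ (hJ1 j' (not_le.1 (hq hi')))
      exact mul_le_mul_of_nonneg_right (hya (by simp [Fin.le_def])) (hc j').le
    · refine le_trans ?_ hgap
      exact mul_le_mul (hya (by simp only [Fin.le_def]; omega)) (hca (Fin.zero_le _)) (hc j').le
        (h.pos_right _).le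
  · refine h.sum_tensor_eq fun j i i' hii' hi => ?_
    simp only [mem_slice, Equiv.refl_symm, Equiv.refl_apply, Finset.mem_filter, Finset.mem_univ,
      true_and] at hi ⊢
    exact ⟨hii'.1 hi.1, hi.2⟩

lemma BlockMaj.not_sMaj_tensor_of_bottom (h : BlockMaj d x y) (hd1 : 1 < d) (hd2 : d + 1 < n)
    {L : ℕ} (hKL : K ≤ L) {c : Fin (K + 1) → ℝ} (hc : ∀ i, 0 < c i) (hca : Antitone c)
    (hle : y ⟨d, by omega⟩ ^ (L + 1) ≤ y ⟨n - 1, by omega⟩ ^ L * y ⟨d - 1, by omega⟩) :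
    ¬ SMaj (tensor x c) (tensor y c) := by
  have hya := h.antitone_right
  set b := y ⟨d - 1, by omega⟩ with hb_def
  set g := y ⟨d, by omega⟩ with hg_def
  set z := y ⟨n - 1, by omega⟩ with hz_def
  have hb : 0 < b := h.pos_right _
  have hg : 0 < g := h.pos_right _
  have hz : 0 < z := h.pos_right _
  have hzg : z ≤ g := hya (by simp only [Fin.le_def]; omega)
  obtain ⟨t, ht1, ht2⟩ := exists_ratio_gap (u := fun i => (c (Fin.rev i))⁻¹)
    (fun i j hij => inv_anti₀ (hc _) (hca (Fin.rev_le_rev.2 hij))) hg hz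
  obtain ⟨J, rfl⟩ : ∃ J, t = Fin.rev J := ⟨Fin.rev t, (Fin.rev_rev t).symm⟩
  simp only [Fin.rev_rev, Fin.rev_zero] at ht1 ht2
  set m := ((Fin.rev J : Fin (K + 1)) : ℕ) with hm
  have hmL : m ≤ L := by omega
  have hJ1 : ∀ i, i < J → g * c J ≤ z * c i := by
    intro i hi
    have := ht1 (Fin.rev i) (Fin.rev_lt_rev.2 hi)
    rw [Fin.rev_rev, ← div_eq_mul_inv, ← div_eq_mul_inv, div_le_div_iff₀ (hc i) (hc J)] at this
    exact this
  have hJ2 : z ^ m * c J ≤ g ^ m * c (Fin.last K) := by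
    rw [← div_eq_mul_inv, ← div_eq_mul_inv, div_le_div_iff₀ (hc _) (hc J)] at ht2
    exact ht2
  have hgap : g * c J ≤ b * c (Fin.last K) := by
    refine le_of_mul_le_mul_left ?_ (pow_pos hz L)
    obtain ⟨t, rfl⟩ := Nat.exists_eq_add_of_le hmL
    have hc0 := hc (Fin.last K)
    calc z ^ (m + t) * (g * c J) = z ^ t * g * (z ^ m * c J) := by ring
      _ ≤ z ^ t * g * (g ^ m * c (Fin.last K)) := by gcongr
      _ ≤ g ^ t * g * (g ^ m * c (Fin.last K)) := by gcongr
      _ = g ^ (m + t + 1) * c (Fin.last K) := by ring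
      _ ≤ (z ^ (m + t) * b) * c (Fin.last K) := by gcongr
      _ = z ^ (m + t) * (b * c (Fin.last K)) := by ring
  refine not_sMaj_of_forall_le finProdFinEquiv
    (X := fun p : Fin n × Fin (K + 1) => x p.1 * c p.2)
    (Y := fun p : Fin n × Fin (K + 1) => y p.1 * c p.2)
    (S := Finset.univ.filter fun p => (p.1 : ℕ) < d ∨ p.2 < J)
    ⟨(⟨0, by omega⟩, 0), by simp; omega⟩ ?_ ?_ ?_
  · intro hS
    have := Finset.filter_eq_self.1 hS (⟨d, by omega⟩, J) (Finset.mem_univ _)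
    simp at this
  · rintro ⟨i, j⟩ hp ⟨i', j'⟩ hq
    simp only [Finset.mem_filter, Finset.mem_univ, true_and, not_or, not_lt] at hp hq
    have h1 : y i' * c j' ≤ g * c J :=
      mul_le_mul (hya (by simp only [Fin.le_def]; omega)) (hca hq.2) (hc _).le hg.le
    refine le_trans h1 ?_
    rcases hp with hi | hj
    · refine hgap.trans ?_
      exact mul_le_mul (hya (by simp only [Fin.le_def]; omega)) (hca (Fin.le_last _)) (hc _).le
        (h.pos_right _).le
    · refine (hJ1 j hj).trans ?_
      exact mul_le_mul_of_nonneg_right (hya (by simp only [Fin.le_def]; omega)) (hc j).le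
  · refine h.sum_tensor_eq fun j i i' hii' hi => ?_
    simp only [mem_slice, Equiv.refl_symm, Equiv.refl_apply, Finset.mem_filter, Finset.mem_univ,
      true_and] at hi ⊢
    exact hi.imp_left hii'.1

lemma BlockMaj.not_sMaj_tpow_of_top (h : BlockMaj d x y) (hd1 : 1 < d) (hd2 : d + 1 < n)
    (hle : y ⟨0, by omega⟩ ^ K * y ⟨d, by omega⟩ ≤ y ⟨d - 1, by omega⟩ ^ (K + 1)) :
    ¬ SMaj (tpow x (K + 1)) (tpow y (K + 1)) := by
  have hya := h.antitone_right
  refine not_sMaj_of_forall_le finFunctionFinEquiv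
    (X := fun f : Fin (K + 1) → Fin n => ∏ j, x (f j))
    (Y := fun f : Fin (K + 1) → Fin n => ∏ j, y (f j))
    (S := Finset.univ.filter fun f => ∀ j, (f j : ℕ) < d)
    ⟨fun _ => ⟨0, by omega⟩, by simp; omega⟩ ?_ ?_ ?_
  · intro hS
    have := Finset.filter_eq_self.1 hS (fun _ => ⟨d, by omega⟩) (Finset.mem_univ _)
    simp at this
  · intro p hp q hq
    simp only [Finset.mem_filter, Finset.mem_univ, true_and, not_forall, not_lt] at hp hq
    obtain ⟨j, hj⟩ := hq
    have h1 : y ⟨d - 1, by omega⟩ ^ (K + 1) ≤ ∏ j, y (p j) := by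
      have := Finset.prod_le_prod (s := Finset.univ) (f := fun _ : Fin (K + 1) =>
        y ⟨d - 1, by omega⟩) (g := fun j => y (p j)) (fun _ _ => (h.pos_right _).le)
        (fun j _ => hya (by have := hp j; simp only [Fin.le_def]; omega))
      simpa using this
    refine le_trans (le_trans ?_ hle) h1
    rw [Fin.prod_univ_succAbove _ j, mul_comm]
    refine mul_le_mul ?_ (hya (by simpa [Fin.le_def] using hj)) (h.pos_right _).le
      (pow_nonneg (h.pos_right _).le _)
    have := Finset.prod_le_prod (s := Finset.univ) (g := fun _ : Fin K =>
        y ⟨0, by omega⟩) (f := fun i => y (q (j.succAbove i))) (fun _ _ => (h.pos_right _).le)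
        (fun j _ => hya (by simp [Fin.le_def]))
    simpa using this
  · refine h.sum_prod_eq (sectionsClosed_iff.2 fun f g hfg hf => ?_)
    simp only [Finset.mem_filter, Finset.mem_univ, true_and] at hf ⊢
    exact fun j => (hfg j).1 (hf j)

lemma BlockMaj.not_sMaj_tpow_of_bottom (h : BlockMaj d x y) (hd1 : 1 < d) (hd2 : d + 1 < n)
    (hle : y ⟨d, by omega⟩ ^ (K + 1) ≤ y ⟨n - 1, by omega⟩ ^ K * y ⟨d - 1, by omega⟩) :
    ¬ SMaj (tpow x (K + 1)) (tpow y (K + 1)) := by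
  have hya := h.antitone_right
  refine not_sMaj_of_forall_le finFunctionFinEquiv
    (X := fun f : Fin (K + 1) → Fin n => ∏ j, x (f j))
    (Y := fun f : Fin (K + 1) → Fin n => ∏ j, y (f j))
    (S := Finset.univ.filter fun f => ∃ j, (f j : ℕ) < d)
    ⟨fun _ => ⟨0, by omega⟩, by simp; omega⟩ ?_ ?_ ?_
  · intro hS
    have := Finset.filter_eq_self.1 hS (fun _ => ⟨d, by omega⟩) (Finset.mem_univ _)
    simp at this
  · intro p hp q hq
    simp only [Finset.mem_filter, Finset.mem_univ, true_and, not_exists, not_lt] at hp hq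
    obtain ⟨j, hj⟩ := hp
    have h1 : ∏ j, y (q j) ≤ y ⟨d, by omega⟩ ^ (K + 1) := by
      have := Finset.prod_le_prod (s := Finset.univ) (g := fun _ : Fin (K + 1) =>
        y ⟨d, by omega⟩) (f := fun j => y (q j)) (fun _ _ => (h.pos_right _).le)
        (fun j _ => hya (by have := hq j; simp only [Fin.le_def]; omega))
      simpa using this
    refine le_trans (le_trans h1 hle) ?_
    rw [Fin.prod_univ_succAbove _ j, mul_comm]
    refine mul_le_mul (hya (by simp only [Fin.le_def]; omega)) ?_
      (pow_nonneg (h.pos_right _).le _) (h.pos_right _).le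
    have := Finset.prod_le_prod (s := Finset.univ) (f := fun _ : Fin K =>
        y ⟨n - 1, by omega⟩) (g := fun i => y (p (j.succAbove i))) (fun _ _ => (h.pos_right _).le)
        (fun j _ => hya (by simp only [Fin.le_def]; omega))
    simpa using this
  · refine h.sum_prod_eq (sectionsClosed_iff.2 fun f g hfg hf => ?_)
    simp only [Finset.mem_filter, Finset.mem_univ, true_and] at hf ⊢
    exact hf.imp fun j => (hfg j).1

end Obstruction

section Sufficiency

variable {n d K : ℕ} {x y : Fin n → ℝ}

lemma BlockMaj.sMaj_tensor (h : BlockMaj d x y) (hd1 : 1 < d) (hd2 : d + 1 < n)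
    {c : Fin (K + 1) → ℝ} (hc : ∀ i, 0 < c i) (hca : Antitone c)
    (htop : ∀ j : Fin K, y ⟨d - 1, by omega⟩ * c j.castSucc < y ⟨0, by omega⟩ * c j.succ)
    (hbot : ∀ j : Fin K, y ⟨n - 1, by omega⟩ * c j.castSucc < y ⟨d, by omega⟩ * c j.succ)
    (hmid : y ⟨d - 1, by omega⟩ * c (Fin.last K) < y ⟨d, by omega⟩ * c 0) :
    SMaj (tensor x c) (tensor y c) := by
  have hslice : ∀ S : Finset (Fin n × Fin (K + 1)), IsLowerSet (S : Set (Fin n × Fin (K + 1))) →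
      0 ≤ ∑ p ∈ S, (y p.1 - x p.1) * c p.2 ∧ (∑ p ∈ S, (y p.1 - x p.1) * c p.2 = 0 →
        ∀ j, BlockClosed d (slice (Equiv.refl (Fin n × Fin (K + 1))) S j)) := by
    intro S hS
    refine h.sum_slice_nonneg (e := Equiv.refl _) hc fun j i i' hi hiS => ?_
    rw [Finset.mem_coe, mem_slice] at hiS ⊢
    exact Finset.mem_coe.1 (hS (show (i', j) ≤ (i, j) from ⟨hi, le_rfl⟩) (Finset.mem_coe.2 hiS))
  simp only [sub_mul, Finset.sum_sub_distrib] at hslice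
  refine sMaj_of_lowerSet finProdFinEquiv
    (X := fun p : Fin n × Fin (K + 1) => x p.1 * c p.2)
    (Y := fun p : Fin n × Fin (K + 1) => y p.1 * c p.2) ?_ ?_ ?_ ?_
  · intro p q hpq
    exact mul_le_mul (h.antitone_left hpq.1) (hca hpq.2) (hc _).le (h.pos_left _).le
  · exact h.sum_tensor_eq fun j _ _ _ _ => by simp [mem_slice]
  · intro S hS
    linarith [(hslice S hS).1]
  · intro S hS hne huniv heq
    have hcl := (hslice S hS).2 (by linarith)
    have hcl' : ∀ (j : Fin (K + 1)) (i i' : Fin n), ((i : ℕ) < d ↔ (i' : ℕ) < d) →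
        (i, j) ∈ S → (i', j) ∈ S := fun j i i' hii' hi =>
      mem_slice.1 (hcl j i i' hii' (mem_slice.2 hi))
    have hlow : ∀ p q : Fin n × Fin (K + 1), q ≤ p → p ∈ S → q ∈ S := fun p q hqp hp =>
      Finset.mem_coe.1 (hS hqp (Finset.mem_coe.2 hp))
    by_contra hcon
    push Not at hcon
    have htopS : ∀ j, ((⟨0, by omega⟩ : Fin n), j) ∈ S := by
      intro j
      induction j using Fin.induction with
      | zero =>
        obtain ⟨p, hp⟩ := hne
        exact hlow p _ ⟨by simp [Fin.le_def], Fin.zero_le _⟩ hp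
      | succ j ih =>
        by_contra hj
        have h1 := hcl' _ _ ⟨d - 1, by omega⟩ (by grind) ih
        linarith [hcon _ h1 _ hj, htop j]
    by_cases h0 : ((⟨d, by omega⟩ : Fin n), (0 : Fin (K + 1))) ∈ S
    · have hbotS : ∀ j, ((⟨d, by omega⟩ : Fin n), j) ∈ S := by
        intro j
        induction j using Fin.induction with
        | zero => exact h0
        | succ j ih =>
          by_contra hj
          have h1 := hcl' _ _ ⟨n - 1, by omega⟩ (by grind) ih
          linarith [hcon _ h1 _ hj, hbot j]
      refine huniv (Finset.eq_univ_of_forall fun p => ?_)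
      by_cases hp : (p.1 : ℕ) < d
      · exact hcl' p.2 _ p.1 (by grind) (htopS p.2)
      · exact hcl' p.2 _ p.1 (by grind) (hbotS p.2)
    · have h1 := hcl' _ _ ⟨d - 1, by omega⟩ (by grind) (htopS (Fin.last K))
      linarith [hcon _ h1 _ h0]

lemma prod_ite_val_lt (u v : ℝ) {p k : ℕ} (hp : p ≤ k) :
    ∏ j : Fin k, (if (j : ℕ) < p then u else v) = u ^ p * v ^ (k - p) := by
  obtain ⟨q, rfl⟩ := Nat.exists_eq_add_of_le hp
  rw [Fin.prod_univ_add]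
  simp

lemma BlockMaj.sMaj_tpow (h : BlockMaj d x y) (hd1 : 1 < d) (hd2 : d + 1 < n) {m : ℝ}
    (hm : 0 ≤ m) (htop : y ⟨d - 1, by omega⟩ ≤ m * y ⟨0, by omega⟩)
    (hbot : y ⟨n - 1, by omega⟩ ≤ m * y ⟨d, by omega⟩)
    (hmid : m ^ K * y ⟨d - 1, by omega⟩ < y ⟨d, by omega⟩) :
    SMaj (tpow x (K + 1)) (tpow y (K + 1)) := by
  refine sMaj_of_lowerSet finFunctionFinEquiv
    (X := fun f : Fin (K + 1) → Fin n => ∏ j, x (f j))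
    (Y := fun f : Fin (K + 1) → Fin n => ∏ j, y (f j)) ?_ ?_ ?_ ?_
  · intro f g hfg
    exact Finset.prod_le_prod (fun _ _ => (h.pos_left _).le) fun j _ => h.antitone_left (hfg j)
  · exact h.sum_prod_eq (sectionsClosed_iff.2 fun _ _ _ _ => Finset.mem_univ _)
  · exact fun S hS => (h.sum_prod_le hS).1
  · intro S hS hne huniv heq
    have hcl := sectionsClosed_iff.1 ((h.sum_prod_le hS).2 heq)
    have hlow : ∀ f g : Fin (K + 1) → Fin n, g ≤ f → f ∈ S → g ∈ S := fun f g hgf hf =>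
      Finset.mem_coe.1 (hS hgf (Finset.mem_coe.2 hf))
    let P : ℕ → Fin (K + 1) → Fin n := fun p j =>
      if (j : ℕ) < p then ⟨0, by omega⟩ else ⟨d, by omega⟩
    let Q : ℕ → Fin (K + 1) → Fin n := fun p j =>
      if (j : ℕ) < p then ⟨d - 1, by omega⟩ else ⟨n - 1, by omega⟩
    have hPQ : ∀ p, P p ∈ S → Q p ∈ S := fun p => hcl _ _ fun j => by
      simp only [P, Q]; grind
    have hP1 : P (K + 1) ∈ S := by
      obtain ⟨f, hf⟩ := hne
      refine hlow f (P (K + 1)) (fun j => ?_) hf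
      simp only [P, if_pos j.isLt]
      exact Nat.zero_le _
    have hP0 : P 0 ∉ S := by
      intro h0
      refine huniv (Finset.eq_univ_of_forall fun f => ?_)
      exact hlow (Q 0) f (fun j => by simp only [Q, Fin.le_def]; simp; omega) (hPQ 0 h0)
    obtain ⟨p, hpK, hp, hp'⟩ : ∃ p, p ≤ K ∧ P p ∉ S ∧ P (p + 1) ∈ S := by
      by_contra hcon
      push Not at hcon
      have : ∀ p, p ≤ K + 1 → P p ∉ S := by
        intro p
        induction p with
        | zero => exact fun _ => hP0
        | succ p ih => exact fun hp => hcon p (by omega) (ih (by omega))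
      exact this _ le_rfl hP1
    refine ⟨Q (p + 1), hPQ _ hp', P p, hp, ?_⟩
    simp only [P, Q, apply_ite y]
    rw [prod_ite_val_lt _ _ (by omega), prod_ite_val_lt _ _ (by omega)]
    obtain ⟨q, rfl⟩ := Nat.exists_eq_add_of_le hpK
    rw [show p + q + 1 - (p + 1) = q by omega, show p + q + 1 - p = q + 1 by omega]
    set a := y ⟨0, by omega⟩
    set b := y ⟨d - 1, by omega⟩
    set g := y ⟨d, by omega⟩
    set z := y ⟨n - 1, by omega⟩
    have ha : 0 < a := h.pos_right _
    have hb : 0 < b := h.pos_right _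
    have hg : 0 < g := h.pos_right _
    have hz : 0 < z := h.pos_right _
    calc b ^ (p + 1) * z ^ q = b ^ p * z ^ q * b := by ring
      _ ≤ (m * a) ^ p * (m * g) ^ q * b := by gcongr
      _ = a ^ p * g ^ q * (m ^ (p + q) * b) := by ring
      _ < a ^ p * g ^ q * g := by gcongr
      _ = a ^ p * g ^ (q + 1) := by ring

lemma BlockMaj.exists_sMaj_tensor (h : BlockMaj d x y) (hd1 : 1 < d) (hd2 : d + 1 < n) {m : ℝ}
    (hm : 0 < m) (hm1 : m < 1) (htop : y ⟨d - 1, by omega⟩ ≤ m * y ⟨0, by omega⟩)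
    (hbot : y ⟨n - 1, by omega⟩ ≤ m * y ⟨d, by omega⟩)
    (hmid : m ^ K * y ⟨d - 1, by omega⟩ < y ⟨d, by omega⟩) :
    ∃ c : Fin (K + 1) → ℝ, (∀ i, 0 < c i) ∧ (∑ i, c i) = 1 ∧ Antitone c ∧
      SMaj (tensor x c) (tensor y c) := by
  obtain ⟨r, ⟨hr1, hr2⟩, hmr⟩ : ∃ r : ℝ,
      (r < 1 ∧ r ^ K * y ⟨d - 1, by omega⟩ < y ⟨d, by omega⟩) ∧ m < r := by
    have h1 : ∀ᶠ r in nhds m, r < 1 ∧ r ^ K * y ⟨d - 1, by omega⟩ < y ⟨d, by omega⟩ :=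
      (eventually_lt_nhds hm1).and
        (((continuous_pow K).mul_const _).continuousAt.eventually_lt_const hmid)
    exact ((h1.filter_mono nhdsWithin_le_nhds).and self_mem_nhdsWithin).exists
      (f := nhdsWithin m (Set.Ioi m))
  have hr : 0 < r := hm.trans hmr
  have hs : 0 < ∑ i : Fin (K + 1), r ^ (i : ℕ) :=
    Finset.sum_pos (fun i _ => pow_pos hr _) Finset.univ_nonempty
  set s := ∑ i : Fin (K + 1), r ^ (i : ℕ)
  have hpos := h.pos_right
  have hstep : ∀ (u v : ℝ) (j : Fin K), 0 < v → u ≤ m * v →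
      u * (r ^ (j.castSucc : ℕ) / s) < v * (r ^ (j.succ : ℕ) / s) := by
    intro u v j hv huv
    have h1 : 0 < r ^ (j : ℕ) / s := div_pos (pow_pos hr _) hs
    have h2 : u < r * v := huv.trans_lt (mul_lt_mul_of_pos_right hmr hv)
    calc u * (r ^ (j.castSucc : ℕ) / s) = u * (r ^ (j : ℕ) / s) := by simp
      _ < r * v * (r ^ (j : ℕ) / s) := by gcongr
      _ = v * (r ^ (j.succ : ℕ) / s) := by rw [Fin.val_succ, pow_succ]; ring
  have hcpos : ∀ i : Fin (K + 1), 0 < r ^ (i : ℕ) / s := fun i => div_pos (pow_pos hr _) hs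
  have hanti : Antitone fun i : Fin (K + 1) => r ^ (i : ℕ) / s := fun i j hij =>
    div_le_div_of_nonneg_right (pow_le_pow_of_le_one hr.le hr1.le hij) hs.le
  refine ⟨fun i => r ^ (i : ℕ) / s, hcpos, ?_, hanti, ?_⟩
  · rw [← Finset.sum_div, div_self hs.ne']
  · refine h.sMaj_tensor hd1 hd2 hcpos hanti (fun j => hstep _ _ j (hpos _) htop)
      (fun j => hstep _ _ j (hpos _) hbot) ?_
    simp only [Fin.val_last, Fin.val_zero, pow_zero, ← mul_div_assoc]
    rw [mul_one, mul_comm]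
    exact div_lt_div_of_pos_right hr2 hs

end Sufficiency

/-- Theorem 14 of the paper. The equivalence of:
(1) every `x ∈ K_d(y)` admits a probability catalyst `c` of dimension at most
`k` with positive components such that `x ⊗ c ◁ y ⊗ c`;
(2) every `x ∈ K_d(y)` satisfies `x^{⊗k} ◁ y^{⊗k}`; and
(3) `y_d^k < y_1^{k-1} y_{d+1}` and `y_{d+1}^k > y_n^{k-1} y_d`
(1-based indices in the informal statement, 0-based here). -/
theorem stmt18 {n : ℕ} (d k : ℕ) (hd1 : 1 < d) (hd2 : d + 1 < n) (hk : 1 ≤ k)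
    (y : Fin n → ℝ) (hy : y ∈ Vn n) (hypos : ∀ i, 0 < y i)
    (hne1 : y ⟨0, by omega⟩ > y ⟨d - 1, by omega⟩)
    (hne2 : y ⟨d, by omega⟩ > y ⟨n - 1, by omega⟩) :
    ((∀ x ∈ Kd y d (by omega), ∃ (k' : ℕ) (c : Fin k' → ℝ), 0 < k' ∧ k' ≤ k ∧
        (∀ i, 0 < c i) ∧ (∑ i, c i) = 1 ∧ Antitone c ∧
        SMaj (tensor x c) (tensor y c)) ↔
      (y ⟨d - 1, by omega⟩ ^ k < y ⟨0, by omega⟩ ^ (k - 1) * y ⟨d, by omega⟩ ∧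
       y ⟨d, by omega⟩ ^ k > y ⟨n - 1, by omega⟩ ^ (k - 1) * y ⟨d - 1, by omega⟩)) ∧
    ((∀ x ∈ Kd y d (by omega), SMaj (tpow x k) (tpow y k)) ↔
      (y ⟨d - 1, by omega⟩ ^ k < y ⟨0, by omega⟩ ^ (k - 1) * y ⟨d, by omega⟩ ∧
       y ⟨d, by omega⟩ ^ k > y ⟨n - 1, by omega⟩ ^ (k - 1) * y ⟨d - 1, by omega⟩)) := by
  have hya := hy.2.2
  obtain ⟨K, rfl⟩ : ∃ K, k = K + 1 := ⟨k - 1, by omega⟩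
  simp only [Nat.add_sub_cancel]
  have ha := hypos ⟨0, by omega⟩
  have hg := hypos ⟨d, by omega⟩
  have hb := hypos ⟨d - 1, by omega⟩
  have hratio : y ⟨d - 1, by omega⟩ ^ (K + 1) < y ⟨0, by omega⟩ ^ K * y ⟨d, by omega⟩ →
      y ⟨d, by omega⟩ ^ (K + 1) > y ⟨n - 1, by omega⟩ ^ K * y ⟨d - 1, by omega⟩ →
      ∃ m : ℝ, 0 < m ∧ m < 1 ∧ y ⟨d - 1, by omega⟩ ≤ m * y ⟨0, by omega⟩ ∧
        y ⟨n - 1, by omega⟩ ≤ m * y ⟨d, by omega⟩ ∧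
        m ^ K * y ⟨d - 1, by omega⟩ < y ⟨d, by omega⟩ := by
    intro h1 h2
    refine ⟨max (y ⟨d - 1, by omega⟩ / y ⟨0, by omega⟩) (y ⟨n - 1, by omega⟩ / y ⟨d, by omega⟩),
      lt_max_of_lt_left (div_pos hb ha), max_lt ((div_lt_one ha).2 hne1) ((div_lt_one hg).2 hne2),
      (div_le_iff₀ ha).1 (le_max_left _ _), (div_le_iff₀ hg).1 (le_max_right _ _), ?_⟩
    rcases max_choice (y ⟨d - 1, by omega⟩ / y ⟨0, by omega⟩)
      (y ⟨n - 1, by omega⟩ / y ⟨d, by omega⟩) with h | h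
    · rw [h, div_pow, div_mul_eq_mul_div, div_lt_iff₀ (pow_pos ha K), ← pow_succ]
      linarith
    · rw [h, div_pow, div_mul_eq_mul_div, div_lt_iff₀ (pow_pos hg K), ← pow_succ']
      exact h2
  obtain ⟨x₀, hx₀⟩ := Kd_nonempty hd1 hd2 hy hypos hne1 hne2
  have hB₀ := blockMaj_of_mem_Kd (by omega) hy hypos hx₀
  refine ⟨⟨fun H => ?_, fun ⟨h1, h2⟩ x hx => ?_⟩, ⟨fun H => ?_, fun ⟨h1, h2⟩ x hx => ?_⟩⟩
  · obtain ⟨k', c, hk', hkK, hc, -, hca, hmaj⟩ := H x₀ hx₀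
    obtain ⟨L, rfl⟩ : ∃ L, k' = L + 1 := ⟨k' - 1, by omega⟩
    constructor <;> by_contra hcon
    · exact hB₀.not_sMaj_tensor_of_top hd1 hd2 (by omega) hc hca (not_lt.1 hcon) hmaj
    · exact hB₀.not_sMaj_tensor_of_bottom hd1 hd2 (by omega) hc hca (not_lt.1 hcon) hmaj
  · obtain ⟨m, hm, hm1, htop, hbot, hmid⟩ := hratio h1 h2
    obtain ⟨c, hc⟩ := (blockMaj_of_mem_Kd (by omega) hy hypos hx).exists_sMaj_tensor
      hd1 hd2 hm hm1 htop hbot hmid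
    exact ⟨K + 1, c, by omega, le_rfl, hc⟩
  · have hmaj := H x₀ hx₀
    constructor <;> by_contra hcon
    · exact hB₀.not_sMaj_tpow_of_top hd1 hd2 (not_lt.1 hcon) hmaj
    · exact hB₀.not_sMaj_tpow_of_bottom hd1 hd2 (not_lt.1 hcon) hmaj
  · obtain ⟨m, hm, -, htop, hbot, hmid⟩ := hratio h1 h2
    exact (blockMaj_of_mem_Kd (by omega) hy hypos hx).sMaj_tpow hd1 hd2 hm.le htop hbot hmid

end
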